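/- A morphism Φ of coisotropic k-modules is a regular epimorphism (i.e. a coequalizer of some pair of morphisms) if and only if Φ_T and Φ_W are surjective and Φ_W(E_0) = F_0. -/

import Mathlib

/-! Coisotropic k-modules (triples of k-modules with a structure map and a
null submodule) and their morphisms, following
Dippell–Esposito–Waldmann. -/

universe u

structure CoisoMod (k : Type u) [CommRing k] : Type (u + 1) where
  T : Type u
  W : Type u
  [addT : AddCommGroup T]
  [addW : AddCommGroup W]
  [modT : Module k T]
  [modW : Module k W]
  N : Submodule k W
  str : W →ₗ[k] T

attribute [instance] CoisoMod.addT CoisoMod.addW CoisoMod.modT CoisoMod.modW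

variable {k : Type u} [CommRing k]

/-- Morphisms of coisotropic `k`-modules. -/
structure CoisoHom (E F : CoisoMod k) : Type u where
  T : E.T →ₗ[k] F.T
  W : E.W →ₗ[k] F.W
  comm : ∀ x : E.W, T (E.str x) = F.str (W x)
  null : ∀ x ∈ E.N, W x ∈ F.N

theorem CoisoHom.ext' {E F : CoisoMod k} {f g : CoisoHom E F}
    (h1 : f.T = g.T) (h2 : f.W = g.W) : f = g := by
  cases f; cases g; cases h1; cases h2; rfl

def CoisoHom.id (E : CoisoMod k) : CoisoHom E E :=
  ⟨LinearMap.id, LinearMap.id, fun _ => rfl, fun _ h => h⟩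

def CoisoHom.comp {E F G : CoisoMod k} (g : CoisoHom F G) (f : CoisoHom E F) :
    CoisoHom E G :=
  ⟨g.T ∘ₗ f.T, g.W ∘ₗ f.W,
    fun x => by simp only [LinearMap.comp_apply, f.comm, g.comm],
    fun x hx => g.null _ (f.null _ hx)⟩

/-- `Φ` is a coequalizer of the parallel pair `(a, b)`. -/
def IsCoequalizerOf {E F G : CoisoMod k} (Φ : CoisoHom E F)
    (a b : CoisoHom G E) : Prop :=
  Φ.comp a = Φ.comp b ∧
    ∀ (H : CoisoMod k) (h : CoisoHom E H), h.comp a = h.comp b →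
      ∃! u : CoisoHom F H, u.comp Φ = h

/-- A regular epimorphism is a morphism arising as a coequalizer of some
parallel pair. -/
def IsRegularEpi {E F : CoisoMod k} (Φ : CoisoHom E F) : Prop :=
  ∃ (G : CoisoMod k) (a b : CoisoHom G E), IsCoequalizerOf Φ a b

/-- A linear map whose kernel contains that of a surjective `f` factors through `f`. -/
theorem LinearMap.exists_comp_eq_of_surjective_of_ker_le {A B C : Type*} [AddCommGroup A]
    [AddCommGroup B] [AddCommGroup C] [Module k A] [Module k B] [Module k C]
    {f : A →ₗ[k] B} (hf : Function.Surjective f) {h : A →ₗ[k] C}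
    (hle : LinearMap.ker f ≤ LinearMap.ker h) : ∃ u : B →ₗ[k] C, u ∘ₗ f = h := by
  refine ⟨(LinearMap.ker f).liftQ h hle ∘ₗ
    (f.quotKerEquivOfSurjective hf).symm.toLinearMap, LinearMap.ext fun x => ?_⟩
  have hx : (f.quotKerEquivOfSurjective hf).symm (f x) = (LinearMap.ker f).mkQ x := by
    rw [LinearEquiv.symm_apply_eq]
    rfl
  simp [hx]

namespace CoisoHom

variable {E F : CoisoMod k}

/-- The image of a morphism, with the image of the null submodule as null submodule. -/
def image (Φ : CoisoHom E F) : CoisoMod k where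
  T := LinearMap.range Φ.T
  W := LinearMap.range Φ.W
  N := E.N.map Φ.W.rangeRestrict
  str := F.str.restrict (by rintro _ ⟨x, rfl⟩; exact ⟨E.str x, Φ.comm x⟩)

/-- The corestriction of a morphism to its image. -/
def toImage (Φ : CoisoHom E F) : CoisoHom E Φ.image where
  T := Φ.T.rangeRestrict
  W := Φ.W.rangeRestrict
  comm x := Subtype.ext (Φ.comm x)
  null x hx := ⟨x, hx, rfl⟩

/-- The inclusion of the image of a morphism into its codomain. -/
def imageIncl (Φ : CoisoHom E F) : CoisoHom Φ.image F where
  T := (LinearMap.range Φ.T).subtype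
  W := (LinearMap.range Φ.W).subtype
  comm _ := rfl
  null := by
    rintro _ ⟨x, hx, rfl⟩
    exact Φ.null x hx

/-- The kernel of a morphism, with zero null submodule. -/
def ker (Φ : CoisoHom E F) : CoisoMod k where
  T := LinearMap.ker Φ.T
  W := LinearMap.ker Φ.W
  N := ⊥
  str := E.str.restrict fun x hx => by
    rw [LinearMap.mem_ker] at hx ⊢
    rw [Φ.comm, hx, map_zero]

/-- The inclusion of the kernel of a morphism into its domain. -/
def kerIncl (Φ : CoisoHom E F) : CoisoHom Φ.ker E where
  T := (LinearMap.ker Φ.T).subtype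
  W := (LinearMap.ker Φ.W).subtype
  comm _ := rfl
  null := by
    rintro _ rfl
    exact E.N.zero_mem

/-- The zero morphism. -/
def zero (E F : CoisoMod k) : CoisoHom E F where
  T := 0
  W := 0
  comm _ := (map_zero F.str).symm
  null _ _ := F.N.zero_mem

end CoisoHom

/-- The inclusion of the image of a regular epimorphism has a section. -/
theorem IsRegularEpi.exists_section_imageIncl {E F : CoisoMod k} {Φ : CoisoHom E F}
    (hΦ : IsRegularEpi Φ) : ∃ u : CoisoHom F Φ.image, Φ.imageIncl.comp u = CoisoHom.id F := by
  obtain ⟨G, a, b, hab, huniv⟩ := hΦ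
  have hq : Φ.toImage.comp a = Φ.toImage.comp b :=
    CoisoHom.ext'
      (LinearMap.ext fun x => Subtype.ext (LinearMap.congr_fun (congrArg CoisoHom.T hab) x))
      (LinearMap.ext fun x => Subtype.ext (LinearMap.congr_fun (congrArg CoisoHom.W hab) x))
  obtain ⟨u, hu, -⟩ := huniv Φ.image Φ.toImage hq
  refine ⟨u, (huniv F Φ hab).unique ?_ rfl⟩
  change Φ.imageIncl.comp (u.comp Φ) = Φ
  rw [hu]
  rfl

/-- A morphism that is surjective on both components and on null submodules is the
coequalizer of its kernel inclusion and zero. -/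
theorem CoisoHom.isCoequalizerOf_kerIncl_zero {E F : CoisoMod k} {Φ : CoisoHom E F}
    (hT : Function.Surjective Φ.T) (hW : Function.Surjective Φ.W)
    (hN : Φ.W '' (E.N : Set E.W) = (F.N : Set F.W)) :
    IsCoequalizerOf Φ Φ.kerIncl (CoisoHom.zero Φ.ker E) := by
  refine ⟨CoisoHom.ext' (LinearMap.ext fun x => ?_) (LinearMap.ext fun x => ?_), ?_⟩
  · exact x.2.trans (map_zero Φ.T).symm
  · exact x.2.trans (map_zero Φ.W).symm
  intro H h hh
  have kT : LinearMap.ker Φ.T ≤ LinearMap.ker h.T := fun x hx =>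
    (LinearMap.congr_fun (congrArg CoisoHom.T hh) ⟨x, hx⟩).trans (map_zero h.T)
  have kW : LinearMap.ker Φ.W ≤ LinearMap.ker h.W := fun x hx =>
    (LinearMap.congr_fun (congrArg CoisoHom.W hh) ⟨x, hx⟩).trans (map_zero h.W)
  obtain ⟨uT, huT⟩ := LinearMap.exists_comp_eq_of_surjective_of_ker_le hT kT
  obtain ⟨uW, huW⟩ := LinearMap.exists_comp_eq_of_surjective_of_ker_le hW kW
  have eT (x) : uT (Φ.T x) = h.T x := LinearMap.congr_fun huT x
  have eW (x) : uW (Φ.W x) = h.W x := LinearMap.congr_fun huW x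
  refine ⟨⟨uT, uW, fun y => ?_, fun y hy => ?_⟩, CoisoHom.ext' huT huW, fun v hv => ?_⟩
  · obtain ⟨x, rfl⟩ := hW y
    rw [← Φ.comm, eT, eW, h.comm]
  · obtain ⟨x, hx, rfl⟩ := hN.ge hy
    rw [eW]
    exact h.null x hx
  · exact CoisoHom.ext'
      (LinearMap.cancel_right hT |>.1 ((congrArg CoisoHom.T hv).trans huT.symm))
      (LinearMap.cancel_right hW |>.1 ((congrArg CoisoHom.W hv).trans huW.symm))

/-- a morphism of coisotropic `k`-modules is a regular
epimorphism iff both components are surjective and the Wobs-component maps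
the null submodule onto the null submodule. -/
theorem coisoHom_regularEpi_iff {E F : CoisoMod k} (Φ : CoisoHom E F) :
    IsRegularEpi Φ ↔
      Function.Surjective Φ.T ∧ Function.Surjective Φ.W ∧
        Φ.W '' (E.N : Set E.W) = (F.N : Set F.W) := by
  constructor
  · intro hΦ
    obtain ⟨u, hu⟩ := hΦ.exists_section_imageIncl
    have hT (y : F.T) : (u.T y).1 = y := LinearMap.congr_fun (congrArg CoisoHom.T hu) y
    have hW (y : F.W) : (u.W y).1 = y := LinearMap.congr_fun (congrArg CoisoHom.W hu) y
    refine ⟨fun y => hT y ▸ (u.T y).2, fun y => hW y ▸ (u.W y).2,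
      Set.Subset.antisymm (Set.image_subset_iff.2 Φ.null) fun y hy => ?_⟩
    obtain ⟨x, hx, hxy⟩ := u.null y hy
    exact ⟨x, hx, (congrArg Subtype.val hxy).trans (hW y)⟩
  · rintro ⟨hT, hW, hN⟩
    exact ⟨_, _, _, CoisoHom.isCoequalizerOf_kerIncl_zero hT hW hN⟩
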